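/- arXiv:hep-th/9805176 — 6 statements merged into one kernel-verified Lean document; each statement's English description precedes it below -/
import Mathlib

section
/- Let N and K be endomorphisms of a vector space V over a field k such that N ∘ N = 0, K ∘ K = 0, and K ∘ N + N ∘ K = c • id for some nonzero scalar c. Then V is the internal direct sum of ker N and ker K, and K restricts to a linear isomorphism from ker N onto ker K; in particular, if V is finite-dimensional then dim ker N = dim ker K = (dim V)/2. -/
/-!
Every `x` splits as `x = c⁻¹ • N (K x) + c⁻¹ • K (N x)`, with the first summand in `ker N` and the
second in `ker K` because `N` and `K` square to zero; a vector killed by both satisfies `c • x = 0`.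
On `ker N` the identity reads `N (K x) = c • x` and on `ker K` it reads `K (N y) = c • y`, so
`c⁻¹ • N` inverts `K : ker N → ker K`. The dimension formula follows from these two facts.
-/

/-- Let `N` and `K` be endomorphisms of a vector space `V` over a field `k` such that
`N ∘ N = 0`, `K ∘ K = 0`, and `K ∘ N + N ∘ K = c • id` for some nonzero scalar `c`.
Then `V` is the internal direct sum of `ker N` and `ker K`, `K` restricts to a linear
isomorphism (a bijection) from `ker N` onto `ker K`, and if `V` is finite-dimensional
then `dim ker N = dim ker K = (dim V)/2`. -/
theorem stmt0 {k V : Type*} [Field k] [AddCommGroup V] [Module k V]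
    (N K : V →ₗ[k] V) (c : k) (hc : c ≠ 0)
    (hN : N ∘ₗ N = 0) (hK : K ∘ₗ K = 0)
    (h : K ∘ₗ N + N ∘ₗ K = c • (LinearMap.id : V →ₗ[k] V)) :
    IsCompl (LinearMap.ker N) (LinearMap.ker K) ∧
    Set.BijOn K (LinearMap.ker N : Set V) (LinearMap.ker K : Set V) ∧
    (FiniteDimensional k V →
      Module.finrank k (LinearMap.ker N) = Module.finrank k V / 2 ∧
      Module.finrank k (LinearMap.ker K) = Module.finrank k V / 2) := by
  have hN' (x : V) : N (N x) = 0 := LinearMap.congr_fun hN x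
  have hK' (x : V) : K (K x) = 0 := LinearMap.congr_fun hK x
  have h' (x : V) : K (N x) + N (K x) = c • x := LinearMap.congr_fun h x
  have hcompl : IsCompl (LinearMap.ker N) (LinearMap.ker K) := by
    constructor
    · rw [Submodule.disjoint_def]
      intro x hxN hxK
      have hx := h' x
      rw [LinearMap.mem_ker.1 hxN, LinearMap.mem_ker.1 hxK, map_zero, map_zero, add_zero] at hx
      exact (smul_eq_zero.1 hx.symm).resolve_left hc
    · rw [codisjoint_iff, Submodule.eq_top_iff']
      intro x
      refine Submodule.mem_sup.2 ⟨c⁻¹ • N (K x), ?_, c⁻¹ • K (N x), ?_, ?_⟩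
      · simp [hN']
      · simp [hK']
      · rw [← smul_add, add_comm, h', inv_smul_smul₀ hc]
  have hbij : Set.BijOn K (LinearMap.ker N : Set V) (LinearMap.ker K : Set V) := by
    refine ⟨fun x _ => hK' x, ?_, ?_⟩
    · intro x hx y hy hxy
      have hx' := h' x
      have hy' := h' y
      rw [LinearMap.mem_ker.1 hx, map_zero, zero_add] at hx'
      rw [LinearMap.mem_ker.1 hy, map_zero, zero_add] at hy'
      exact smul_right_injective V hc (by simp only [← hx', ← hy', hxy])
    · intro y hy
      refine ⟨c⁻¹ • N y, by simp [hN'], ?_⟩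
      have hy' := h' y
      rw [LinearMap.mem_ker.1 hy, map_zero, add_zero] at hy'
      rw [map_smul, hy', inv_smul_smul₀ hc]
  refine ⟨hcompl, hbij, fun _ => ?_⟩
  have hsum := Submodule.finrank_add_eq_of_isCompl hcompl
  have heq : Module.finrank k (LinearMap.ker N) = Module.finrank k (LinearMap.ker K) :=
    (LinearEquiv.ofBijective (K.restrict hbij.mapsTo) hbij.bijective).finrank_eq
  omega
end

section
/- Let V be a finite-dimensional vector space over a field, let S be a semisimple endomorphism of V and N a nilpotent endomorphism of V with S ∘ N = N ∘ S. Then ker(S + N) = ker S ∩ ker N. -/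
/-!
If `(S + N) x = 0`, then `S x = (-N) x`, and because `S` and `N` commute, `S ^ n x = (-N) ^ n x`,
which vanishes for large `n`. A semisimple endomorphism has no generalized eigenvectors for `0`
outside its kernel (`Module.End.IsFinitelySemisimple.maxGenEigenspace_eq_eigenspace`), so
`S x = 0`, and then `N x = 0`. The other inclusion is immediate.
-/

/-- Let `V` be a finite-dimensional vector space over a field, `S` a semisimple
endomorphism of `V` and `N` a nilpotent endomorphism of `V` with `S ∘ N = N ∘ S`.
Then `ker (S + N) = ker S ∩ ker N`. -/
theorem stmt1 {k V : Type*} [Field k] [AddCommGroup V] [Module k V]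
    [FiniteDimensional k V]
    (S N : Module.End k V) (hS : S.IsSemisimple) (hN : IsNilpotent N)
    (hcomm : S ∘ₗ N = N ∘ₗ S) :
    LinearMap.ker (S + N) = LinearMap.ker S ⊓ LinearMap.ker N := by
  ext x
  simp only [LinearMap.mem_ker, Submodule.mem_inf, LinearMap.add_apply]
  refine ⟨fun h => ?_, fun h => by rw [h.1, h.2, add_zero]⟩
  obtain ⟨n, hn⟩ := hN
  have hc : Commute S (-N) := (show Commute S N from hcomm).neg_right
  have hx : S x = (-N) x := eq_neg_of_add_eq_zero_left h
  -- On `ker (S + N)` the maps `S` and `-N` agree, and since they commute so do their powers.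
  have hpow : ∀ m : ℕ, (S ^ m) x = ((-N) ^ m) x := by
    intro m
    induction m with
    | zero => rfl
    | succ m ih =>
      rw [pow_succ, Module.End.mul_apply, hx, ← Module.End.mul_apply,
        (hc.pow_left m).eq, Module.End.mul_apply, ih, ← Module.End.mul_apply, ← pow_succ']
  -- Hence `x` is a generalized eigenvector of the semisimple `S` for `0`, so an eigenvector.
  have hgen : x ∈ S.maxGenEigenspace 0 := by
    rw [Module.End.mem_maxGenEigenspace]
    refine ⟨n, ?_⟩
    rw [zero_smul, sub_zero, hpow, neg_pow, hn, mul_zero, LinearMap.zero_apply]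
  rw [hS.isFinitelySemisimple.maxGenEigenspace_eq_eigenspace,
    Module.End.mem_eigenspace_iff, zero_smul] at hgen
  exact ⟨hgen, by rwa [hgen, zero_add] at h⟩
end

section
/- Let u, v ∈ V be orthogonal vectors with u null, i.e. Q u = 0, and set g = 1 + ι v * ι u, so that g is invertible with inverse 1 − ι v * ι u. Then: (a) g * ι v * g⁻¹ = ι v − (2 * Q v) • ι u, i.e. the null rotation g sends the vector v to v − 2 Q(v) u; and (b) for every vector w ∈ V orthogonal to both u and v, g commutes with ι w, i.e. g * ι w * g⁻¹ = ι w. -/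
/-!
Put `n = ι v * ι u`. Since `v ⊥ u` and `u` is null, `n` squares to zero, so `1 + n` and `1 - n`
are mutually inverse. Moreover `n * ι v = -Q v • ι u`, `ι v * n = Q v • ι u` and
`n * ι v * n = 0`, which gives (a); a vector orthogonal to `u` and `v` anticommutes with both
factors of `n`, hence commutes with `n`, which gives (b).
-/

open CliffordAlgebra

/-- Let `u, v ∈ V` be orthogonal vectors with `u` null (`Q u = 0`), and set
`g = 1 + ι v * ι u`, so that `g` is invertible with inverse `g⁻¹ = 1 - ι v * ι u`.
Then (a) `g * ι v * g⁻¹ = ι v - (2 * Q v) • ι u`, and (b) for every vector `w`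
orthogonal to both `u` and `v`, `g * ι w * g⁻¹ = ι w`. -/
theorem stmt8 {V : Type*} [AddCommGroup V] [Module ℝ V] (Q : QuadraticForm ℝ V)
    (u v : V) (horth : QuadraticMap.polar Q v u = 0) (hu : Q u = 0) :
    (1 + ι Q v * ι Q u) * ι Q v * (1 - ι Q v * ι Q u) =
        ι Q v - (2 * Q v) • ι Q u ∧
    (∀ w : V, QuadraticMap.polar Q u w = 0 → QuadraticMap.polar Q v w = 0 →
      (1 + ι Q v * ι Q u) * ι Q w * (1 - ι Q v * ι Q u) = ι Q w) := by
  have anti : ∀ a b : V, QuadraticMap.polar Q a b = 0 → ι Q a * ι Q b = -(ι Q b * ι Q a) := by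
    intro a b h
    rw [ι_mul_ι_comm, h, map_zero, zero_sub]
  have huu : ι Q u * ι Q u = 0 := by rw [ι_sq_scalar, hu, map_zero]
  have huv : ι Q u * ι Q v = -(ι Q v * ι Q u) := by rw [anti v u horth, neg_neg]
  have hvn : ι Q v * (ι Q v * ι Q u) = Q v • ι Q u := by
    rw [← mul_assoc, ι_sq_scalar, Algebra.smul_def]
  have hnv : ι Q v * ι Q u * ι Q v = -(Q v • ι Q u) := by
    rw [mul_assoc, huv, mul_neg, hvn]
  have hun : ι Q u * (ι Q v * ι Q u) = 0 := by
    rw [← mul_assoc, huv, neg_mul, mul_assoc, huu, mul_zero, neg_zero]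
  have hnn : ι Q v * ι Q u * (ι Q v * ι Q u) = 0 := by
    rw [mul_assoc, hun, mul_zero]
  refine ⟨?_, fun w huw hvw => ?_⟩
  · rw [add_mul, one_mul, hnv, mul_sub, mul_one, add_mul, hvn, neg_mul, smul_mul_assoc, hun]
    module
  · have hnw : ι Q v * ι Q u * ι Q w = ι Q w * (ι Q v * ι Q u) := by
      rw [mul_assoc, anti u w huw, mul_neg, ← mul_assoc, anti v w hvw, neg_mul, neg_neg,
        mul_assoc]
    rw [add_mul, one_mul, hnw, mul_sub, mul_one, add_mul, mul_assoc (ι Q w), hnn, mul_zero]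
    abel
end

section
/- Let V be a vector space over a field k and let A, B, P be endomorphisms of V such that A ∘ A = 0, B ∘ B = 0, A ∘ B + B ∘ A = c • id for some nonzero scalar c, P ∘ P = id, P ∘ A = − A ∘ P, and P ∘ B = − B ∘ P. Then B restricts to a linear isomorphism from the subspace ker A ∩ ker(P − id) onto the subspace ker B ∩ ker(P + id); in particular, if V is finite-dimensional these subspaces have equal dimension. -/
/-!
On `ker A` the relation `A B + B A = c` reads `A (B x) = c x`, and on `ker B` it reads
`B (A y) = c y`. Hence `B : ker A → ker B` is bijective with inverse `c⁻¹ A`. Both maps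
anticommute with `P`, so they exchange the `+1` and `-1` eigenspaces of `P`.
-/

/-- Let `A, B, P` be endomorphisms of a vector space `V` over `k` with `A ∘ A = 0`,
`B ∘ B = 0`, `A ∘ B + B ∘ A = c • id` for some nonzero `c`, `P ∘ P = id`,
`P ∘ A = - A ∘ P` and `P ∘ B = - B ∘ P`.  Then `B` restricts to a linear isomorphism
(a bijection) from `ker A ∩ ker (P - id)` onto `ker B ∩ ker (P + id)`; in particular,
if `V` is finite-dimensional these subspaces have equal dimension. -/
theorem stmt14 {k V : Type*} [Field k] [AddCommGroup V] [Module k V]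
    (A B P : V →ₗ[k] V) (c : k) (hc : c ≠ 0)
    (hA : A ∘ₗ A = 0) (hB : B ∘ₗ B = 0)
    (hAB : A ∘ₗ B + B ∘ₗ A = c • (LinearMap.id : V →ₗ[k] V))
    (hP : P ∘ₗ P = LinearMap.id)
    (hPA : P ∘ₗ A = -(A ∘ₗ P)) (hPB : P ∘ₗ B = -(B ∘ₗ P)) :
    Set.BijOn B
      ((LinearMap.ker A ⊓ LinearMap.ker (P - LinearMap.id) : Submodule k V) : Set V)
      ((LinearMap.ker B ⊓ LinearMap.ker (P + LinearMap.id) : Submodule k V) : Set V) ∧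
    (FiniteDimensional k V →
      Module.finrank k ↥(LinearMap.ker A ⊓ LinearMap.ker (P - LinearMap.id)) =
        Module.finrank k ↥(LinearMap.ker B ⊓ LinearMap.ker (P + LinearMap.id))) := by
  have hA' : ∀ x, A (A x) = 0 := fun x => LinearMap.congr_fun hA x
  have hB' : ∀ x, B (B x) = 0 := fun x => LinearMap.congr_fun hB x
  have hAB' : ∀ x, A (B x) + B (A x) = c • x := fun x => LinearMap.congr_fun hAB x
  have hPA' : ∀ x, P (A x) = -A (P x) := fun x => LinearMap.congr_fun hPA x
  have hPB' : ∀ x, P (B x) = -B (P x) := fun x => LinearMap.congr_fun hPB x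
  have mem_dom : ∀ x, x ∈ LinearMap.ker A ⊓ LinearMap.ker (P - LinearMap.id) ↔
      A x = 0 ∧ P x = x := fun x => by
    simp [sub_eq_zero]
  have mem_cod : ∀ y, y ∈ LinearMap.ker B ⊓ LinearMap.ker (P + LinearMap.id) ↔
      B y = 0 ∧ P y = -y := fun y => by
    simp [add_eq_zero_iff_eq_neg]
  have hbij : Set.BijOn B
      ((LinearMap.ker A ⊓ LinearMap.ker (P - LinearMap.id) : Submodule k V) : Set V)
      ((LinearMap.ker B ⊓ LinearMap.ker (P + LinearMap.id) : Submodule k V) : Set V) := by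
    refine Set.InvOn.bijOn (f' := fun y => c⁻¹ • A y) ⟨?_, ?_⟩ ?_ ?_
    · intro x hx
      obtain ⟨hx, -⟩ := (mem_dom x).1 hx
      have h := hAB' x
      rw [hx, map_zero, add_zero] at h
      simp only [h, inv_smul_smul₀ hc]
    · intro y hy
      obtain ⟨hy, -⟩ := (mem_cod y).1 hy
      have h := hAB' y
      rw [hy, map_zero, zero_add] at h
      simp only [map_smul, h, inv_smul_smul₀ hc]
    · intro x hx
      obtain ⟨-, hx⟩ := (mem_dom x).1 hx
      exact (mem_cod _).2 ⟨hB' x, by rw [hPB', hx]⟩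
    · intro y hy
      obtain ⟨-, hy⟩ := (mem_cod y).1 hy
      refine (mem_dom _).2 ⟨by simp only [map_smul, hA', smul_zero], ?_⟩
      simp only [map_smul, hPA', hy, map_neg, neg_neg]
  refine ⟨hbij, fun _ => ?_⟩
  exact (LinearEquiv.ofBijective (B.restrict hbij.mapsTo) hbij.bijective).finrank_eq
end

section
/- Let V be a finite-dimensional vector space over a field of characteristic zero, let N, K, P be endomorphisms of V and J a linear automorphism of V such that: N ∘ N = 0, K ∘ K = 0, K ∘ N + N ∘ K = c • id with c ≠ 0, P ∘ P = id, P ∘ N = − N ∘ P, J ∘ N = N ∘ J, and J ∘ P = − P ∘ J. Then dim (ker N ∩ ker(P − id)) = (dim V)/4. -/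
/-!
The homotopy `K` makes the complex `(V, N)` acyclic: if `N v = 0` then `v = c⁻¹ • N (K v)`, so
`ker N = range N` and rank-nullity gives `2 * dim ker N = dim V`. Since `P` anticommutes with `N`,
it preserves `ker N`, and `ker N` splits into the `+1` and `-1` eigenspaces of `P` on it. The
automorphism `J` preserves `ker N` and, anticommuting with `P`, exchanges these two eigenspaces,
so each has half the dimension of `ker N`, a quarter of `dim V`.
-/

/-- Let `V` be a finite-dimensional vector space over a field of characteristic
zero, `N, K, P` endomorphisms of `V` and `J` a linear automorphism such that
`N ∘ N = 0`, `K ∘ K = 0`, `K ∘ N + N ∘ K = c • id` with `c ≠ 0`, `P ∘ P = id`,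
`P ∘ N = - N ∘ P`, `J ∘ N = N ∘ J` and `J ∘ P = - P ∘ J`.  Then
`dim (ker N ∩ ker (P - id)) = (dim V)/4`. -/
theorem stmt17 {k V : Type*} [Field k] [CharZero k] [AddCommGroup V] [Module k V]
    [FiniteDimensional k V]
    (N K P : V →ₗ[k] V) (J : V ≃ₗ[k] V) (c : k) (hc : c ≠ 0)
    (hN : N ∘ₗ N = 0) (hK : K ∘ₗ K = 0)
    (hNK : K ∘ₗ N + N ∘ₗ K = c • (LinearMap.id : V →ₗ[k] V))
    (hP : P ∘ₗ P = LinearMap.id)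
    (hPN : P ∘ₗ N = -(N ∘ₗ P))
    (hJN : J.toLinearMap ∘ₗ N = N ∘ₗ J.toLinearMap)
    (hJP : J.toLinearMap ∘ₗ P = -(P ∘ₗ J.toLinearMap)) :
    Module.finrank k ↥(LinearMap.ker N ⊓ LinearMap.ker (P - LinearMap.id)) =
      Module.finrank k V / 4 := by
  have eNN : ∀ v, N (N v) = 0 := fun v => LinearMap.congr_fun hN v
  have eNK : ∀ v, K (N v) + N (K v) = c • v := fun v => LinearMap.congr_fun hNK v
  have ePP : ∀ v, P (P v) = v := fun v => LinearMap.congr_fun hP v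
  have ePN : ∀ v, P (N v) = -N (P v) := fun v => LinearMap.congr_fun hPN v
  have eJN : ∀ v, J (N v) = N (J v) := fun v => LinearMap.congr_fun hJN v
  have eJP : ∀ v, J (P v) = -P (J v) := fun v => LinearMap.congr_fun hJP v
  have hker : LinearMap.range N = LinearMap.ker N := by
    ext v
    rw [LinearMap.mem_range, LinearMap.mem_ker]
    constructor
    · rintro ⟨w, rfl⟩
      exact eNN w
    · intro hv
      refine ⟨c⁻¹ • K v, ?_⟩
      have h := eNK v
      rw [hv, map_zero, zero_add] at h
      rw [map_smul, h, inv_smul_smul₀ hc]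
  have hrank := LinearMap.finrank_range_add_finrank_ker N
  rw [hker] at hrank
  set A : Submodule k V := LinearMap.ker N ⊓ LinearMap.ker (P - LinearMap.id) with hA
  set B : Submodule k V := LinearMap.ker N ⊓ LinearMap.ker (P + LinearMap.id) with hB
  have memA : ∀ v, v ∈ A ↔ N v = 0 ∧ P v = v := fun v => by
    simp [hA, sub_eq_zero]
  have memB : ∀ v, v ∈ B ↔ N v = 0 ∧ P v = -v := fun v => by
    simp [hB, add_eq_zero_iff_eq_neg]
  have h2 : (2 : k) ≠ 0 := two_ne_zero
  have hinf : A ⊓ B = ⊥ := by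
    rw [eq_bot_iff]
    intro v hv
    obtain ⟨hvA, hvB⟩ := Submodule.mem_inf.mp hv
    have h : v = -v := ((memA v).mp hvA).2.symm.trans ((memB v).mp hvB).2
    have h' : (2 : k) • v = 0 := by
      rw [two_smul]
      exact eq_neg_iff_add_eq_zero.mp h
    exact (Submodule.mem_bot k).mpr ((smul_eq_zero.mp h').resolve_left h2)
  have hsup : A ⊔ B = LinearMap.ker N := by
    apply le_antisymm (sup_le inf_le_left inf_le_left)
    intro v hv
    have hNv : N v = 0 := hv
    have hNPv : N (P v) = 0 := by
      have h := ePN v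
      rw [hNv, map_zero] at h
      exact neg_eq_zero.mp h.symm
    -- The eigenspace components of `v` are `(v + P v) / 2` and `(v - P v) / 2`.
    refine Submodule.mem_sup.mpr ⟨(2 : k)⁻¹ • (v + P v), (memA _).mpr ⟨?_, ?_⟩,
      (2 : k)⁻¹ • (v - P v), (memB _).mpr ⟨?_, ?_⟩, ?_⟩
    · simp [hNv, hNPv]
    · rw [map_smul, map_add, ePP, add_comm]
    · simp [hNv, hNPv]
    · rw [map_smul, map_sub, ePP, ← smul_neg, neg_sub]
    · rw [← smul_add, add_add_sub_cancel, ← two_smul k v, inv_smul_smul₀ h2]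
  have hAB : Module.finrank k A ≤ Module.finrank k B := by
    rw [← J.finrank_map_eq A]
    apply Submodule.finrank_mono
    rintro _ ⟨v, hv, rfl⟩
    obtain ⟨h0, h1⟩ := (memA v).mp hv
    refine (memB _).mpr ⟨?_, ?_⟩
    · change N (J v) = 0
      rw [← eJN, h0, map_zero]
    · change P (J v) = -J v
      rw [← neg_eq_iff_eq_neg, ← eJP, h1]
  have hBA : Module.finrank k B ≤ Module.finrank k A := by
    rw [← J.finrank_map_eq B]
    apply Submodule.finrank_mono
    rintro _ ⟨v, hv, rfl⟩
    obtain ⟨h0, h1⟩ := (memB v).mp hv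
    refine (memA _).mpr ⟨?_, ?_⟩
    · change N (J v) = 0
      rw [← eJN, h0, map_zero]
    · change P (J v) = J v
      rw [← neg_inj, ← eJP, h1, map_neg]
  have hdim := Submodule.finrank_sup_add_finrank_inf_eq A B
  rw [hsup, hinf, finrank_bot] at hdim
  omega
end

section
/- Let e : Fin 11 → V be a family of pairwise orthogonal vectors with Q (e 0) = −1 and Q (e i) = 1 for all i ≥ 1, and let ω = ι(e 0) * ι(e 1) * ⋯ * ι(e 10) be the ordered product of their images in the Clifford algebra. Then ω * ω = 1, and ω commutes with ι(e i) for every i; consequently ω commutes with ι v for every v in the span of the e i. -/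
/-!
Moving a vector through a product of `n` vectors orthogonal to it costs the sign `(-1) ^ n`
(`prod_map_ι_mul_ι`). If the vector is instead one of the `n` pairwise orthogonal factors, it
commutes with itself and the sign is `(-1) ^ (n - 1)` (`prod_map_ι_mul_ι_of_mem`); this is `1` for
`n = 11`, so `ω` commutes with every `ι (e i)`, and by linearity with `ι v` for `v` in the span.
Peeling off one factor at a time, the same sign rule gives
`ω * ω = (-1) ^ (n choose 2) * ∏ Q (e i)` (`prod_map_ι_mul_self`). For `n = 11` the exponent is
`55`, which is odd, and the product of the `Q (e i)` is `-1`, so `ω * ω = 1`.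
-/

open CliffordAlgebra

section

variable {V : Type*} [AddCommGroup V] [Module ℝ V] {Q : QuadraticForm ℝ V}

lemma ι_mul_ι_of_polar_eq_zero {v w : V} (h : QuadraticMap.polar Q v w = 0) :
    ι Q v * ι Q w = -(ι Q w * ι Q v) := by
  have := ι_mul_ι_add_swap (Q := Q) v w
  rw [h, map_zero] at this
  exact eq_neg_of_add_eq_zero_left this

lemma prod_map_ι_mul_ι (v : V) (l : List V) (h : ∀ w ∈ l, QuadraticMap.polar Q w v = 0) :
    (l.map (ι Q)).prod * ι Q v = (-1 : ℝ) ^ l.length • (ι Q v * (l.map (ι Q)).prod) := by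
  induction l with
  | nil => simp
  | cons w t ih =>
    rw [List.forall_mem_cons] at h
    rw [List.map_cons, List.prod_cons, mul_assoc, ih h.2, mul_smul_comm, ← mul_assoc,
      ι_mul_ι_of_polar_eq_zero h.1, List.length_cons, pow_succ, mul_smul, neg_one_smul,
      neg_mul, mul_assoc]

/-- The exponent is `l.length + 1` rather than `l.length - 1`, which has the same parity, to avoid
truncated subtraction. -/
lemma prod_map_ι_mul_ι_of_mem (v : V) (l : List V)
    (h : l.Pairwise fun a b => QuadraticMap.polar Q a b = 0) (hv : v ∈ l) :
    (l.map (ι Q)).prod * ι Q v = (-1 : ℝ) ^ (l.length + 1) • (ι Q v * (l.map (ι Q)).prod) := by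
  induction l with
  | nil => simp at hv
  | cons w t ih =>
    rw [List.pairwise_cons] at h
    rw [List.map_cons, List.prod_cons, List.length_cons, mul_assoc]
    rcases List.mem_cons.1 hv with rfl | hv
    · rw [prod_map_ι_mul_ι v t fun w hw => by rw [QuadraticMap.polar_comm]; exact h.1 w hw,
        mul_smul_comm, pow_succ, pow_succ, mul_assoc, neg_one_mul, neg_neg, mul_one]
    · rw [ih h.2 hv, mul_smul_comm, ← mul_assoc, ι_mul_ι_of_polar_eq_zero (h.1 v hv),
        pow_succ _ (t.length + 1), mul_smul, neg_one_smul, neg_mul, mul_assoc]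

lemma prod_map_ι_mul_self (l : List V)
    (h : l.Pairwise fun a b => QuadraticMap.polar Q a b = 0) :
    (l.map (ι Q)).prod * (l.map (ι Q)).prod =
      algebraMap ℝ _ ((-1) ^ l.length.choose 2 * (l.map Q).prod) := by
  induction l with
  | nil => simp
  | cons v t ih =>
    rw [List.pairwise_cons] at h
    have hsign := prod_map_ι_mul_ι v t fun w hw => by
      rw [QuadraticMap.polar_comm]; exact h.1 w hw
    simp only [List.map_cons, List.prod_cons, List.length_cons]
    set P := (t.map (ι Q)).prod
    calc ι Q v * P * (ι Q v * P) = ι Q v * (P * ι Q v) * P := by simp only [mul_assoc]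
      _ = (-1 : ℝ) ^ t.length • (ι Q v * ι Q v * (P * P)) := by
        rw [hsign]; simp only [mul_smul_comm, smul_mul_assoc, mul_assoc]
      _ = _ := by
        rw [ih h.2, ι_sq_scalar, Algebra.smul_def, ← map_mul, ← map_mul, Nat.choose_succ_succ',
          Nat.choose_one_right, pow_add]
        congr 1
        ring

end

/-- Let `e : Fin 11 → V` be a family of pairwise orthogonal vectors with
`Q (e 0) = -1` and `Q (e i) = 1` for all `i ≥ 1`, and let
`ω = ι (e 0) * ι (e 1) * ⋯ * ι (e 10)` be the ordered product of their images in
the Clifford algebra.  Then `ω * ω = 1` and `ω` commutes with `ι (e i)` for every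
`i`; consequently `ω` commutes with `ι v` for every `v` in the span of the `e i`. -/
theorem stmt19 {V : Type*} [AddCommGroup V] [Module ℝ V] (Q : QuadraticForm ℝ V)
    (e : Fin 11 → V)
    (horth : ∀ i j, i ≠ j → QuadraticMap.polar Q (e i) (e j) = 0)
    (h0 : Q (e 0) = -1) (h1 : ∀ i : Fin 11, i ≠ 0 → Q (e i) = 1) :
    (List.ofFn fun i => ι Q (e i)).prod * (List.ofFn fun i => ι Q (e i)).prod = 1 ∧
    (∀ i : Fin 11,
      (List.ofFn fun i => ι Q (e i)).prod * ι Q (e i) =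
        ι Q (e i) * (List.ofFn fun i => ι Q (e i)).prod) ∧
    (∀ v ∈ Submodule.span ℝ (Set.range e),
      (List.ofFn fun i => ι Q (e i)).prod * ι Q v =
        ι Q v * (List.ofFn fun i => ι Q (e i)).prod) := by
  have hpw : (List.ofFn e).Pairwise fun a b => QuadraticMap.polar Q a b = 0 :=
    List.pairwise_ofFn.2 fun i j hij => horth i j hij.ne
  have hω : (List.ofFn fun i => ι Q (e i)) = (List.ofFn e).map (ι Q) := by
    rw [List.map_ofFn]; rfl
  have hcomm : ∀ i : Fin 11, (List.ofFn fun i => ι Q (e i)).prod * ι Q (e i) =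
      ι Q (e i) * (List.ofFn fun i => ι Q (e i)).prod := by
    intro i
    rw [hω, prod_map_ι_mul_ι_of_mem (e i) _ hpw (List.mem_ofFn.2 ⟨i, rfl⟩), List.length_ofFn,
      Even.neg_one_pow (by decide), one_smul]
  refine ⟨?_, hcomm, fun v hv => ?_⟩
  · have hQ : ((List.ofFn e).map Q).prod = -1 := by
      rw [List.map_ofFn, List.prod_ofFn, Fin.prod_univ_succ]
      simp [h0, h1, Fin.succ_ne_zero]
    rw [hω, prod_map_ι_mul_self _ hpw, hQ, List.length_ofFn, Odd.neg_one_pow (by decide)]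
    simp
  · induction hv using Submodule.span_induction with
    | mem x hx =>
      obtain ⟨i, rfl⟩ := hx
      exact hcomm i
    | zero => simp
    | add x y _ _ hx hy => rw [map_add, mul_add, add_mul, hx, hy]
    | smul c x _ hx => rw [map_smul, mul_smul_comm, smul_mul_assoc, hx]
end
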